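/- arXiv:0805.0330 — 3 statements merged into one kernel-verified Lean document; each statement's English description precedes it below -/
import Mathlib

section
/- For every ATRA₁ 𝒜 = ⟨Σ, Q, q_I, F, δ⟩, the dual automaton 𝒜̄ recognises the complement over finite data trees: a finite data tree τ with alphabet Σ belongs to L^fin(𝒜̄) if and only if τ does not belong to L^fin(𝒜). In particular, ATRA₁ on finite data trees are closed under complement. -/
/-! ## Trees and data trees -/

abbrev Node : Type := List Bool

/-- A (possibly infinite) data tree over alphabet `A`, with data from `ℕ`.
It is represented by the partial labelling functions on nonleaf nodes:
`label n = some a` iff `n` is a nonleaf node labelled `a`, and similarly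
`dlabel` gives the datum at each nonleaf node. -/
structure DataTree (A : Type) where
  label : Node → Option A
  dlabel : Node → Option ℕ
  root_nonleaf : (label []).isSome
  domain_eq : ∀ n : Node, (dlabel n).isSome ↔ (label n).isSome
  tree_cond : ∀ (n : Node) (d : Bool), (label (n ++ [d])).isSome → (label n).isSome

namespace DataTree
variable {A : Type}

def Nonleaf (τ : DataTree A) (n : Node) : Prop := (τ.label n).isSome

/-- The set of nodes: the root together with both children of every nonleaf node. -/
def Nodes (τ : DataTree A) : Set Node :=
  {n | n = [] ∨ ∃ m d, n = m ++ [d] ∧ τ.Nonleaf m}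

def Leaf (τ : DataTree A) (n : Node) : Prop := n ∈ τ.Nodes ∧ ¬ τ.Nonleaf n

def Finite (τ : DataTree A) : Prop := {n | τ.Nonleaf n}.Finite

end DataTree

/-- A (possibly infinite) tree over alphabet `A` (a data tree without data). -/
structure BTree (A : Type) where
  label : Node → Option A
  root_nonleaf : (label []).isSome
  tree_cond : ∀ (n : Node) (d : Bool), (label (n ++ [d])).isSome → (label n).isSome

namespace BTree
variable {A : Type}
def Nonleaf (t : BTree A) (n : Node) : Prop := (t.label n).isSome
def Nodes (t : BTree A) : Set Node :=
  {n | n = [] ∨ ∃ m d, n = m ++ [d] ∧ t.Nonleaf m}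
def Leaf (t : BTree A) (n : Node) : Prop := n ∈ t.Nodes ∧ ¬ t.Nonleaf n
def Finite (t : BTree A) : Prop := {n | t.Nonleaf n}.Finite
end BTree

/-- The underlying tree of a data tree (erasing the data). -/
def DataTree.toTree {A : Type} (τ : DataTree A) : BTree A :=
  ⟨τ.label, τ.root_nonleaf, τ.tree_cond⟩

/-- `τ` and `τ'` have equal `l`-prefixes: they agree on all nodes of length `< l`
(hence their restrictions to nodes of length `≤ l` coincide). -/
def EqPrefix {A : Type} (τ τ' : DataTree A) (l : ℕ) : Prop :=
  ∀ n : Node, n.length < l → τ.label n = τ'.label n ∧ τ.dlabel n = τ'.dlabel n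

open Classical in
/-- The distance between data trees: `0` if they are equal, and otherwise `1/l`
where `l` is least such that the `l`-prefixes are distinct. -/
noncomputable def treeDist {A : Type} (τ τ' : DataTree A) : ℝ :=
  if τ = τ' then 0 else ((sInf {l : ℕ | ¬ EqPrefix τ τ' l} : ℕ) : ℝ)⁻¹

/-! ## Forward alternating tree 1-register automata (ATRA₁) -/

/-- Positive Boolean formulae over `Q`: atoms `q(d, ↓)` / `q(d, ¬↓)` are
`atom q d true` / `atom q d false`, where `d : Bool` is the direction. -/
inductive PosBool (Q : Type) : Type
  | atom : Q → Bool → Bool → PosBool Q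
  | tt : PosBool Q
  | ff : PosBool Q
  | and : PosBool Q → PosBool Q → PosBool Q
  | or : PosBool Q → PosBool Q → PosBool Q

/-- Satisfaction of a positive Boolean formula by a quadruple
`R d u` of subsets of `Q` (`d` = direction, `u = true` means register update `↓`). -/
def PosBool.Sat {Q : Type} (R : Bool → Bool → Set Q) : PosBool Q → Prop
  | .atom q d u => q ∈ R d u
  | .tt => True
  | .ff => False
  | .and φ ψ => φ.Sat R ∧ ψ.Sat R
  | .or φ ψ => φ.Sat R ∨ ψ.Sat R

/-- The dual of a positive Boolean formula: swaps `⊤`/`⊥` and `∧`/`∨`. -/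
def PosBool.dual {Q : Type} : PosBool Q → PosBool Q
  | .atom q d u => .atom q d u
  | .tt => .ff
  | .ff => .tt
  | .and φ ψ => .or φ.dual ψ.dual
  | .or φ ψ => .and φ.dual ψ.dual

def PosBool.map {Q Q' : Type} (f : Q → Q') : PosBool Q → PosBool Q'
  | .atom q d u => .atom (f q) d u
  | .tt => .tt
  | .ff => .ff
  | .and φ ψ => .and (φ.map f) (ψ.map f)
  | .or φ ψ => .or (φ.map f) (ψ.map f)

/-- A forward alternating tree 1-register automaton. -/
structure ATRA (A : Type) where
  Q : Type
  fin : Finite Q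
  qI : Q
  F : Set Q
  δ : Q → A → Bool → PosBool Q

namespace ATRA
variable {A : Type}

/-- The transition relation between configurations (finite sets of threads),
relative to a letter `a` and a datum `E`. -/
def Trans (M : ATRA A) (a : A) (E : ℕ) (G H0 H1 : Set (M.Q × ℕ)) : Prop :=
  ∀ q D, (q, D) ∈ G →
    ∃ R : Bool → Bool → Set M.Q,
      (M.δ q a (decide (D = E))).Sat R ∧
      ∀ d : Bool,
        (∀ r ∈ R d true, (r, E) ∈ (if d then H1 else H0)) ∧
        (∀ r ∈ R d false, (r, D) ∈ (if d then H1 else H0))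

/-- A run of `M` on a data tree `τ`. -/
structure Run (M : ATRA A) (τ : DataTree A) where
  G : Node → Set (M.Q × ℕ)
  finite : ∀ n : Node, (G n).Finite
  support : ∀ n : Node, n ∉ τ.Nodes → G n = ∅
  init : ∃ D : ℕ, τ.dlabel [] = some D ∧ (M.qI, D) ∈ G []
  step : ∀ (n : Node) (a : A) (D : ℕ), τ.label n = some a → τ.dlabel n = some D →
    M.Trans a D (G n) (G (n ++ [false])) (G (n ++ [true]))

def Run.Final {M : ATRA A} {τ : DataTree A} (ρ : M.Run τ) : Prop :=
  ∀ n, τ.Leaf n → ∀ q D, (q, D) ∈ ρ.G n → q ∈ M.F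

def Run.FiniteRun {M : ATRA A} {τ : DataTree A} (ρ : M.Run τ) : Prop :=
  ∃ l : ℕ, ∀ n : Node, l ≤ n.length → ρ.G n = ∅

/-- The language of `M` over finite data trees. -/
def Lfin (M : ATRA A) : Set (DataTree A) :=
  {τ | τ.Finite ∧ ∃ ρ : M.Run τ, ρ.Final}

/-- The safety language of `M`: data trees on which `M` has a final run. -/
def Lsaf (M : ATRA A) : Set (DataTree A) :=
  {τ | ∃ ρ : M.Run τ, ρ.Final}

/-- The co-safety language of `M`: data trees on which `M` has a final finite run. -/
def Lcos (M : ATRA A) : Set (DataTree A) :=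
  {τ | ∃ ρ : M.Run τ, ρ.Final ∧ ρ.FiniteRun}

/-- The dual automaton: final states complemented, transition formulae dualised. -/
def dual (M : ATRA A) : ATRA A :=
  ⟨M.Q, M.fin, M.qI, M.Fᶜ, fun q a b => (M.δ q a b).dual⟩

end ATRA

/-!
The threads from which `M` can accept form the greatest fixed point of a one-step acceptance
operator on families of configurations: the final runs are essentially its post-fixed points.
Passing to the dual automaton conjugates the operator by complementation, so it sends fixed points
to complements of fixed points. On a finite tree the operator has only one fixed point, by
induction from the leaves to the root, and so the fixed points of `M` and its dual are complements
of each other.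
-/

namespace PosBool
variable {Q : Type}

theorem Sat.mono {R S : Bool → Bool → Set Q} (h : R ≤ S) {φ : PosBool Q} (hφ : φ.Sat R) :
    φ.Sat S := by
  induction φ with
  | atom q d u => exact h d u hφ
  | tt => trivial
  | ff => exact hφ
  | and φ ψ ihφ ihψ => exact hφ.imp ihφ ihψ
  | or φ ψ ihφ ihψ => exact hφ.imp ihφ ihψ

theorem sat_dual_compl (R : Bool → Bool → Set Q) (φ : PosBool Q) :
    φ.dual.Sat Rᶜ ↔ ¬ φ.Sat R := by
  induction φ with
  | atom q d u => exact Iff.rfl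
  | tt => exact not_true.symm
  | ff => exact not_false_iff.symm
  | and φ ψ ihφ ihψ => exact (or_congr ihφ ihψ).trans not_and_or.symm
  | or φ ψ ihφ ihψ => exact (and_congr ihφ ihψ).trans not_or.symm

end PosBool

namespace DataTree
variable {A : Type} {τ : DataTree A} {n : Node}

theorem Nonleaf.exists_label (h : τ.Nonleaf n) :
    ∃ a E, τ.label n = some a ∧ τ.dlabel n = some E := by
  obtain ⟨a, ha⟩ := Option.isSome_iff_exists.1 h
  obtain ⟨E, hE⟩ := Option.isSome_iff_exists.1 ((τ.domain_eq n).2 h)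
  exact ⟨a, E, ha, hE⟩

theorem nonleaf_of_label_eq {a : A} (h : τ.label n = some a) : τ.Nonleaf n :=
  Option.isSome_of_eq_some h

theorem Nonleaf.append_mem_nodes (h : τ.Nonleaf n) (d : Bool) : n ++ [d] ∈ τ.Nodes :=
  Or.inr ⟨n, d, rfl, h⟩

theorem Finite.induction_on {P : Node → Prop} (hτ : τ.Finite) (n : Node)
    (leaf : ∀ n, ¬ τ.Nonleaf n → P n)
    (nonleaf : ∀ n, τ.Nonleaf n → (∀ d, P (n ++ [d])) → P n) : P n := by
  obtain ⟨b, hb⟩ := (hτ.image List.length).bddAbove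
  suffices h : ∀ k (n : Node), b < n.length + k → P n from h (b + 1) n (by omega)
  intro k
  induction k with
  | zero => exact fun n hn => leaf n fun hnonleaf => hn.not_ge (hb ⟨n, hnonleaf, rfl⟩)
  | succ k ih =>
    intro n hn
    by_cases hnonleaf : τ.Nonleaf n
    · refine nonleaf n hnonleaf fun d => ih _ ?_
      rw [List.length_append, List.length_singleton]
      omega
    · exact leaf n hnonleaf

/-- The data occurring on the path from the root to `n`, both included: the only values
that the register of a thread started at the root can hold on reaching `n`. -/
def pathData (τ : DataTree A) (n : Node) : Set ℕ :=
  {D | ∃ m, m <+: n ∧ τ.dlabel m = some D}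

theorem finite_pathData (τ : DataTree A) (n : Node) : (τ.pathData n).Finite := by
  refine (n.inits.filterMap τ.dlabel).finite_toSet.subset fun D ⟨m, hm, hD⟩ => ?_
  exact List.mem_filterMap.2 ⟨m, (List.mem_inits m n).2 hm, hD⟩

theorem mem_pathData {E : ℕ} (hE : τ.dlabel n = some E) : E ∈ τ.pathData n :=
  ⟨n, List.prefix_rfl, hE⟩

theorem pathData_subset_append (τ : DataTree A) (n l : Node) :
    τ.pathData n ⊆ τ.pathData (n ++ l) :=
  fun _ ⟨m, hm, hD⟩ => ⟨m, hm.trans (List.prefix_append n l), hD⟩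

end DataTree

namespace ATRA
variable {A : Type}

/-- The largest quadruple of sets of states with which a thread holding `D` can move at a node
with datum `E` while its successors in direction `d` stay inside `H d`. -/
def moves {Q : Type} (E D : ℕ) (H : Bool → Set (Q × ℕ)) : Bool → Bool → Set Q :=
  fun d u => {r | (r, if u then E else D) ∈ H d}

theorem moves_mono {Q : Type} (E D : ℕ) : Monotone (moves (Q := Q) E D) :=
  fun _ _ h d _ _ hr => h d hr

theorem trans_iff_sat_moves {M : ATRA A} {a : A} {E : ℕ} {G : Set (M.Q × ℕ)}
    {H : Bool → Set (M.Q × ℕ)} :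
    M.Trans a E G (H false) (H true) ↔
      ∀ q D, (q, D) ∈ G → (M.δ q a (decide (D = E))).Sat (moves E D H) := by
  have subset_iff (R : Bool → Bool → Set M.Q) (D : ℕ) :
      (∀ d : Bool, (∀ r ∈ R d true, (r, E) ∈ (if d then H true else H false)) ∧
        (∀ r ∈ R d false, (r, D) ∈ (if d then H true else H false))) ↔ R ≤ moves E D H := by
    simp [moves, Pi.le_def, Set.subset_def]
    tauto
  simp only [Trans, subset_iff]
  refine forall₃_congr fun q D _ => ⟨fun ⟨R, hR, hle⟩ => hR.mono hle, fun h => ⟨_, h, le_rfl⟩⟩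

/-- One-step acceptance: at a nonleaf node `n`, the threads that can move so that all their
successors lie in `W`; elsewhere, the threads in a final state. The two labels of `n` are defined
simultaneously, so the second case of the match is that of a node without children. -/
def acceptStep (M : ATRA A) (τ : DataTree A) (W : Node → Set (M.Q × ℕ)) (n : Node) :
    Set (M.Q × ℕ) :=
  {p | match τ.label n, τ.dlabel n with
    | some a, some E => (M.δ p.1 a (decide (p.2 = E))).Sat (moves E p.2 fun d => W (n ++ [d]))
    | _, _ => p.1 ∈ M.F}

section acceptStep
variable {M : ATRA A} {τ : DataTree A} {V W : Node → Set (M.Q × ℕ)} {n : Node}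

theorem mem_acceptStep_of_label_eq {a : A} {E : ℕ} (ha : τ.label n = some a)
    (hE : τ.dlabel n = some E) {p : M.Q × ℕ} :
    p ∈ M.acceptStep τ W n ↔
      (M.δ p.1 a (decide (p.2 = E))).Sat (moves E p.2 fun d => W (n ++ [d])) := by
  simp [acceptStep, ha, hE]

theorem mem_acceptStep_of_not_nonleaf (h : ¬ τ.Nonleaf n) {p : M.Q × ℕ} :
    p ∈ M.acceptStep τ W n ↔ p.1 ∈ M.F := by
  have hlabel : τ.label n = none := Option.not_isSome_iff_eq_none.1 h
  simp [acceptStep, hlabel]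

theorem acceptStep_mono (M : ATRA A) (τ : DataTree A) : Monotone (M.acceptStep τ) := by
  intro V W h n p hp
  by_cases hn : τ.Nonleaf n
  · obtain ⟨a, E, ha, hE⟩ := hn.exists_label
    rw [mem_acceptStep_of_label_eq ha hE] at hp ⊢
    exact hp.mono (moves_mono _ _ fun d => h (n ++ [d]))
  · rw [mem_acceptStep_of_not_nonleaf hn] at hp ⊢
    exact hp

theorem acceptStep_dual_compl (M : ATRA A) (τ : DataTree A) (W : Node → Set (M.Q × ℕ)) :
    M.dual.acceptStep τ Wᶜ = (M.acceptStep τ W)ᶜ := by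
  ext n p
  by_cases h : τ.Nonleaf n
  · obtain ⟨a, E, ha, hE⟩ := h.exists_label
    exact (mem_acceptStep_of_label_eq ha hE).trans <|
      (PosBool.sat_dual_compl (moves E p.2 fun d => W (n ++ [d])) _).trans
        (mem_acceptStep_of_label_eq (M := M) ha hE).not.symm
  · exact (mem_acceptStep_of_not_nonleaf h).trans (mem_acceptStep_of_not_nonleaf h).not.symm

theorem acceptStep_congr (h : τ.Nonleaf n → ∀ d, V (n ++ [d]) = W (n ++ [d])) :
    M.acceptStep τ V n = M.acceptStep τ W n := by
  ext p
  by_cases hn : τ.Nonleaf n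
  · obtain ⟨a, E, ha, hE⟩ := hn.exists_label
    simp only [mem_acceptStep_of_label_eq ha hE, h hn]
  · simp only [mem_acceptStep_of_not_nonleaf hn]

theorem eq_of_isFixedPt_acceptStep (hτ : τ.Finite) (hV : Function.IsFixedPt (M.acceptStep τ) V)
    (hW : Function.IsFixedPt (M.acceptStep τ) W) : V = W := by
  funext n
  have eq_of_children {n : Node} (h : τ.Nonleaf n → ∀ d, V (n ++ [d]) = W (n ++ [d])) :
      V n = W n := by
    rw [← hV.eq, ← hW.eq]
    exact acceptStep_congr h
  induction n using hτ.induction_on with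
  | leaf n hn => exact eq_of_children (absurd · hn)
  | nonleaf n _ ih => exact eq_of_children fun _ => ih

end acceptStep

/-- The threads at each node of `τ` from which `M` can accept the subtree below that node: the
greatest fixed point of one-step acceptance, so that infinite branches are accepting. -/
def accepting (M : ATRA A) (τ : DataTree A) : Node → Set (M.Q × ℕ) :=
  OrderHom.gfp ⟨M.acceptStep τ, M.acceptStep_mono τ⟩

theorem isFixedPt_accepting (M : ATRA A) (τ : DataTree A) :
    Function.IsFixedPt (M.acceptStep τ) (M.accepting τ) :=
  OrderHom.isFixedPt_gfp ⟨M.acceptStep τ, M.acceptStep_mono τ⟩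

theorem le_accepting {M : ATRA A} {τ : DataTree A} {W : Node → Set (M.Q × ℕ)}
    (hW : W ≤ M.acceptStep τ W) : W ≤ M.accepting τ :=
  OrderHom.le_gfp ⟨M.acceptStep τ, M.acceptStep_mono τ⟩ hW

theorem accepting_dual (M : ATRA A) {τ : DataTree A} (hτ : τ.Finite) :
    M.dual.accepting τ = (M.accepting τ)ᶜ := by
  refine eq_of_isFixedPt_acceptStep hτ (M.dual.isFixedPt_accepting τ) ?_
  exact (acceptStep_dual_compl M τ _).trans (congrArg _ (M.isFixedPt_accepting τ).eq)

section Run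
variable {M : ATRA A} {τ : DataTree A} {W : Node → Set (M.Q × ℕ)}

theorem Run.mem_nodes (ρ : M.Run τ) {n : Node} {p : M.Q × ℕ} (hp : p ∈ ρ.G n) : n ∈ τ.Nodes := by
  by_contra hn
  simp [ρ.support n hn] at hp

theorem Run.Final.le_accepting {ρ : M.Run τ} (hρ : ρ.Final) : ρ.G ≤ M.accepting τ := by
  refine ATRA.le_accepting fun n p hp => ?_
  by_cases hn : τ.Nonleaf n
  · obtain ⟨a, E, ha, hE⟩ := hn.exists_label
    rw [mem_acceptStep_of_label_eq ha hE]
    exact trans_iff_sat_moves (H := fun d => ρ.G (n ++ [d])) |>.1 (ρ.step n a E ha hE) _ _ hp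
  · rw [mem_acceptStep_of_not_nonleaf hn]
    exact hρ n ⟨ρ.mem_nodes hp, hn⟩ _ _ hp

/-- The run read off a post-fixed point `W` of one-step acceptance. Restricting the register
values to data on the path from the root makes the configurations finite. -/
def Run.ofLEAcceptStep (hW : W ≤ M.acceptStep τ W)
    (init : ∃ D, τ.dlabel [] = some D ∧ (M.qI, D) ∈ W []) : M.Run τ where
  G n := {p ∈ W n | n ∈ τ.Nodes ∧ p.2 ∈ τ.pathData n}
  finite n := by
    have := M.fin
    exact (Set.finite_univ.prod (τ.finite_pathData n)).subset fun p hp => ⟨trivial, hp.2.2⟩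
  support n hn := Set.eq_empty_of_forall_notMem fun p hp => hn hp.2.1
  init := init.imp fun D ⟨hD, hq⟩ => ⟨hD, hq, Or.inl rfl, DataTree.mem_pathData hD⟩
  step n a E ha hE := by
    refine trans_iff_sat_moves
      (H := fun d => {p ∈ W (n ++ [d]) | n ++ [d] ∈ τ.Nodes ∧ p.2 ∈ τ.pathData (n ++ [d])}) |>.2 ?_
    rintro q D ⟨hq, -, hD⟩
    refine ((mem_acceptStep_of_label_eq ha hE).1 (hW n hq)).mono fun d u r hr => ?_
    refine ⟨hr, (DataTree.nonleaf_of_label_eq ha).append_mem_nodes d, ?_⟩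
    apply τ.pathData_subset_append n [d]
    cases u
    · exact hD
    · exact DataTree.mem_pathData hE

theorem Run.final_ofLEAcceptStep (hW : W ≤ M.acceptStep τ W)
    (init : ∃ D, τ.dlabel [] = some D ∧ (M.qI, D) ∈ W []) :
    (Run.ofLEAcceptStep hW init).Final :=
  fun n hn _ _ hp => (mem_acceptStep_of_not_nonleaf hn.2).1 (hW n hp.1)

end Run

theorem mem_Lsaf_iff {M : ATRA A} {τ : DataTree A} :
    τ ∈ M.Lsaf ↔ ∃ D, τ.dlabel [] = some D ∧ (M.qI, D) ∈ M.accepting τ [] := by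
  constructor
  · rintro ⟨ρ, hρ⟩
    exact ρ.init.imp fun D ⟨hD, hq⟩ => ⟨hD, hρ.le_accepting [] hq⟩
  · intro init
    exact ⟨_, Run.final_ofLEAcceptStep (M.isFixedPt_accepting τ).eq.ge init⟩

theorem mem_Lfin_iff {M : ATRA A} {τ : DataTree A} (hτ : τ.Finite) {D : ℕ}
    (hD : τ.dlabel [] = some D) : τ ∈ M.Lfin ↔ (M.qI, D) ∈ M.accepting τ [] := by
  have mem_Lfin_iff_mem_Lsaf : τ ∈ M.Lfin ↔ τ ∈ M.Lsaf := and_iff_right hτ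
  simp [mem_Lfin_iff_mem_Lsaf, mem_Lsaf_iff, hD]

end ATRA

theorem atra_dual_complement_fin_general {A : Type} (M : ATRA A) (τ : DataTree A)
    (hτ : τ.Finite) : τ ∈ M.dual.Lfin ↔ τ ∉ M.Lfin := by
  obtain ⟨D, hD⟩ := Option.isSome_iff_exists.1 ((τ.domain_eq []).2 τ.root_nonleaf)
  rw [ATRA.mem_Lfin_iff hτ hD, ATRA.mem_Lfin_iff hτ hD, M.accepting_dual hτ]
  exact Iff.rfl

/-- The dual automaton recognises the complement over finite
data trees: a finite data tree belongs to `L^fin(𝒜̄)` iff it does not belong to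
`L^fin(𝒜)`. In particular, ATRA₁ on finite data trees are closed under complement. -/
theorem atra_dual_complement_fin {A : Type} [Fintype A] (M : ATRA A)
    (τ : DataTree A) (hτ : τ.Finite) :
    τ ∈ M.dual.Lfin ↔ τ ∉ M.Lfin :=
  atra_dual_complement_fin_general M τ hτ
end

section
/- (Lazy simulation of faulty counter steps) Let k ∈ ℕ and let l be an instruction in L = {inc, dec, ifz} × {1, …, k}. For all counter valuations v, w, w' : {1,…,k} → ℕ: if v ≤ w pointwise and w →^l w', then there exists a counter valuation v' such that v →^l_♭ v' and v' ≤ w' pointwise. -/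
/-! ## Counters with incrementing errors -/

/-- A counter valuation on `k` counters. -/
abbrev Val (k : ℕ) : Type := Fin k → ℕ

/-- Pointwise order on counter valuations. -/
def ValLE {k : ℕ} (v w : Val k) : Prop := ∀ c, v c ≤ w c

/-- Instructions over `k` counters: increment, decrement, zero-test. -/
inductive Instr (k : ℕ) : Type
  | inc : Fin k → Instr k
  | dec : Fin k → Instr k
  | ifz : Fin k → Instr k

/-- Error-free steps. -/
def StepExact {k : ℕ} : Instr k → Val k → Val k → Prop
  | .inc c, v, v' => v' = Function.update v c (v c + 1)
  | .dec c, v, v' => 0 < v c ∧ v' = Function.update v c (v c - 1)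
  | .ifz c, v, v' => v c = 0 ∧ v' = v

/-- Steps with incrementing errors. -/
def StepErr {k : ℕ} (l : Instr k) (v v' : Val k) : Prop :=
  ∃ vs vs', ValLE v vs ∧ StepExact l vs vs' ∧ ValLE vs' v'

/-- Lazy steps: either error-free, or a decrement of `0` erroneously yields `0`. -/
def StepLazy {k : ℕ} (l : Instr k) (v v' : Val k) : Prop :=
  StepExact l v v' ∨ ∃ c, l = Instr.dec c ∧ v c = 0 ∧ v' = v

/-! ## Incrementing tree counter automata (ITCA) -/

/-- A forward incrementing tree counter automaton with ε-transitions. -/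
structure ITCA (A : Type) where
  Q : Type
  fin : Finite Q
  qI : Q
  F : Set Q
  k : ℕ
  δ : Set (Q × A × Instr k × Q × Q)
  δε : Set (Q × Instr k × Q)

namespace ITCA
variable {A : Type}

/-- A run of `C` on a finite tree: a block (nonempty sequence of configurations,
consecutive ones related by ε-transitions with incrementing errors) at each node. -/
structure Run (C : ITCA A) (t : BTree A) where
  B : Node → List (C.Q × Val C.k)
  nonempty : ∀ n ∈ t.Nodes, B n ≠ []
  block : ∀ n ∈ t.Nodes,
    List.Chain' (fun x y => ∃ l, (x.1, l, y.1) ∈ C.δε ∧ StepErr l x.2 y.2) (B n)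
  init : (B []).head? = some (C.qI, fun _ => 0)
  step : ∀ (n : Node) (a : A), t.label n = some a →
    ∃ q v l r0 r1 w0 w1,
      (B n).getLast? = some (q, v) ∧
      (q, a, l, r0, r1) ∈ C.δ ∧
      StepErr l v w0 ∧ StepErr l v w1 ∧
      (B (n ++ [false])).head? = some (r0, w0) ∧
      (B (n ++ [true])).head? = some (r1, w1)

def Run.Accepting {C : ITCA A} {t : BTree A} (ρ : C.Run t) : Prop :=
  ∀ n, t.Leaf n → ∀ q v, (ρ.B n).getLast? = some (q, v) → q ∈ C.F

/-- The language of `C`: finite trees on which `C` has an accepting run. -/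
def Lang (C : ITCA A) : Set (BTree A) :=
  {t | t.Finite ∧ ∃ ρ : C.Run t, ρ.Accepting}

/-- The transition relation between levels (finite sets of configurations):
each non-final configuration is replaced by the configuration(s) some firable
transition yields lazily, and final configurations are removed. -/
def LevelStep (C : ITCA A) (G G' : Set (C.Q × Val C.k)) : Prop :=
  ∃ f : C.Q × Val C.k → Set (C.Q × Val C.k),
    (∀ x ∈ G, x.1 ∉ C.F →
      (∃ a l r0 r1 w0 w1, (x.1, a, l, r0, r1) ∈ C.δ ∧
        StepLazy l x.2 w0 ∧ StepLazy l x.2 w1 ∧ f x = {(r0, w0), (r1, w1)}) ∨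
      (∃ l r w, (x.1, l, r) ∈ C.δε ∧ StepLazy l x.2 w ∧ f x = {(r, w)})) ∧
    G' = ⋃ x ∈ {y ∈ G | y.1 ∉ C.F}, f x

end ITCA

/-- The quasi-order on levels: each configuration of `G` is dominated
(same state, pointwise smaller-or-equal valuation) by some configuration of `H`. -/
def LevelLE {Q : Type} {k : ℕ} (G H : Set (Q × Val k)) : Prop :=
  ∀ x ∈ G, ∃ y ∈ H, x.1 = y.1 ∧ ValLE x.2 y.2

/-!
The lazy step of a fixed instruction is a monotone partial function with downward closed domain: a
lazy decrement is truncated subtraction, hence total, and a zero test that passes at a valuation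
passes at every smaller one. A step from `w` to `w'` with incrementing errors contains an error-free
step from `s` to `s'` with `v ≤ w ≤ s` and `s' ≤ w'`, so the lazy step from `v` exists and ends at
or below `s'`.
-/

section

variable {k : ℕ} {l : Instr k} {u v w w' : Val k}

theorem ValLE.trans (huv : ValLE u v) (hvw : ValLE v w) : ValLE u w :=
  fun c => (huv c).trans (hvw c)

theorem ValLE.update (hvw : ValLE v w) {m n : ℕ} (hmn : m ≤ n) (c : Fin k) :
    ValLE (Function.update v c m) (Function.update w c n) :=
  update_le_update_iff.2 ⟨hmn, fun d _ => hvw d⟩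

theorem stepLazy_dec_iff {c : Fin k} :
    StepLazy (.dec c) v w ↔ w = Function.update v c (v c - 1) := by
  rcases Nat.eq_zero_or_pos (v c) with hzero | hpos
  · have hupdate : Function.update v c 0 = v := Function.update_eq_self_iff.2 hzero.symm
    simp [StepLazy, StepExact, hzero, hupdate]
  · simp [StepLazy, StepExact, hpos, hpos.ne']

theorem StepExact.exists_stepLazy_valLE (hstep : StepExact l w w') (hvw : ValLE v w) :
    ∃ v', StepLazy l v v' ∧ ValLE v' w' := by
  cases l with
  | inc c =>
    obtain rfl := hstep
    exact ⟨_, .inl rfl, hvw.update (Nat.add_le_add_right (hvw c) 1) c⟩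
  | dec c =>
    obtain ⟨-, rfl⟩ := hstep
    exact ⟨_, stepLazy_dec_iff.2 rfl, hvw.update (Nat.sub_le_sub_right (hvw c) 1) c⟩
  | ifz c =>
    obtain ⟨hzero, rfl⟩ := hstep
    have hvzero : v c = 0 := Nat.eq_zero_of_le_zero (hzero ▸ hvw c)
    exact ⟨v, .inl ⟨hvzero, rfl⟩, hvw⟩

end

/-- (Lazy simulation of faulty counter steps) If `v ≤ w`
pointwise and `w →^l w'` (step with incrementing errors), then there is `v'`
with `v →^l_♭ v'` (lazy step) and `v' ≤ w'` pointwise. -/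
theorem lazy_simulation {k : ℕ} (l : Instr k) (v w w' : Val k)
    (hvw : ValLE v w) (hstep : StepErr l w w') :
    ∃ v' : Val k, StepLazy l v v' ∧ ValLE v' w' := by
  obtain ⟨s, s', hws, hexact, hs'⟩ := hstep
  obtain ⟨v', hlazy, hv'⟩ := hexact.exists_stepLazy_valLE (hvw.trans hws)
  exact ⟨v', hlazy, hv'.trans hs'⟩
end

section
/- (Soundness of the data abstraction) Let 𝒜 = ⟨Σ, Q, q_I, F, δ⟩ be an ATRA₁. Whenever G →_a^E H₀, H₁ is a concrete transition between configurations of 𝒜, the abstract transition v →_a^{Q_=} w₀, w₁ holds, where v = Ḡ, w₀ = H̄₀ and w₁ = H̄₁ are the abstractions of G, H₀, H₁, and Q_= = {q : ⟨q, E⟩ ∈ G} is the bundle of E in G. -/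
/-! ## The data abstraction for ATRA₁ configurations -/

/-- The bundle of a datum `D` in a configuration `G`. -/
def Bundle {Q : Type} (G : Set (Q × ℕ)) (D : ℕ) : Set Q := {q | (q, D) ∈ G}

/-- The abstraction of a configuration: for each (nonempty) `S ⊆ Q`, the number
of data whose bundle equals `S`. -/
noncomputable def AbstractOf {Q : Type} (G : Set (Q × ℕ)) : Set Q → ℕ :=
  fun S => Set.ncard {D : ℕ | Bundle G D = S}

/-- `⟨S, i⟩` is an abstract datum of the abstract configuration `v`. -/
def AbsDatum {Q : Type} (v : Set Q → ℕ) (S : Set Q) (i : ℕ) : Prop :=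
  S.Nonempty ∧ 1 ≤ i ∧ i ≤ v S

open Classical in
/-- The abstract transition relation `v →_a^{Q_=} w₀, w₁`. -/
def ATRA.AbsTrans {A : Type} (M : ATRA A) (a : A) (Qeq : Set M.Q)
    (v w0 w1 : Set M.Q → ℕ) : Prop :=
  (0 < v Qeq ∨ Qeq = ∅) ∧
  ∃ R' : Set M.Q → ℕ → Bool → Bool → Set M.Q,
    (∀ S i, AbsDatum v S i → ∀ q ∈ S,
      ∃ R : Bool → Bool → Set M.Q,
        (M.δ q a (decide (S = Qeq ∧ i = 1))).Sat R ∧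
        ∀ d u, R d u ⊆ R' S i d u) ∧
    (∀ d : Bool,
      ∃ Req : Set M.Q,
        R' Qeq 1 d false ⊆ Req ∧
        (∀ S i, AbsDatum v S i → R' S i d true ⊆ Req) ∧
        (∀ S' : Set M.Q, S'.Nonempty →
          Set.ncard {p : Set M.Q × ℕ |
              AbsDatum v p.1 p.2 ∧ p ≠ (Qeq, 1) ∧ R' p.1 p.2 d false = S'} +
            (if Req = S' then 1 else 0) ≤ (if d then w1 else w0) S'))

/-- An abstract run of `M` on a finite tree `t`. -/
structure ATRA.AbsRun {A : Type} (M : ATRA A) (t : BTree A) where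
  v : Node → Set M.Q → ℕ
  step : ∀ (n : Node) (a : A), t.label n = some a →
    ∃ Qeq : Set M.Q,
      M.AbsTrans a Qeq (v n) (v (n ++ [false])) (v (n ++ [true])) ∧
      (n = [] → M.qI ∈ Qeq)

/-- An abstract run is accepting iff at every leaf, `v_n(S) = 0` for all `S ⊄ F`. -/
def ATRA.AbsRun.Accepting {A : Type} {M : ATRA A} {t : BTree A}
    (ρ : M.AbsRun t) : Prop :=
  ∀ n, t.Leaf n → ∀ S : Set M.Q, ¬ S ⊆ M.F → ρ.v n S = 0

/-!
Name every abstract datum `⟨S, i⟩` of `Ḡ` by a concrete datum with bundle `S`, injectively and so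
that `⟨Q_=, 1⟩` names `E`. Let `R'(S, i)_d^↓` be the bundle of `E` in `H_d`, let `R'(S, i)_d^¬↓` be
the bundle in `H_d` of the datum named by `⟨S, i⟩`, and let `R_d^=` be the bundle of `E` in `H_d`.
The bounds defining an abstract transition then count distinct data with bundle `S'` in `H_d`: those
named by abstract data other than `⟨Q_=, 1⟩`, and possibly `E`.
-/

open Set

section Counting

variable {α β : Type*} {s : Set α} {t : Set β}

theorem exists_injOn_apply_eq_of_encard_le (hs : s.Finite) (hst : s.encard ≤ t.encard) (a : α)
    {b : β} (hb : b ∈ t) : ∃ f : α → β, MapsTo f s t ∧ InjOn f s ∧ f a = b := by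
  classical
  have : Nonempty β := ⟨b⟩
  obtain ⟨g, hgt, hg⟩ := hs.exists_injOn_of_encard_le hst
  by_cases ha : a ∈ s
  · have hswap : BijOn (Equiv.swap (g a) b) t t :=
      Equiv.swap_bijOn_self (iff_of_true (hgt ha) hb)
    exact ⟨Equiv.swap (g a) b ∘ g, hswap.mapsTo.comp hgt, hswap.injOn.comp hg hgt,
      Equiv.swap_apply_left _ _⟩
  · have heq : EqOn g (Function.update g a b) s :=
      fun x hx => (Function.update_of_ne (ne_of_mem_of_not_mem hx ha) b g).symm
    exact ⟨Function.update g a b, heq.mapsTo_iff.1 hgt, heq.injOn_iff.1 hg,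
      Function.update_self _ _ _⟩

theorem ncard_add_ite_le_ncard {f : α → β} {x : β} {p : Prop} [Decidable p] (ht : t.Finite)
    (hft : MapsTo f s t) (hf : InjOn f s) (hx : ∀ a ∈ s, f a ≠ x) (hp : p → x ∈ t) :
    s.ncard + (if p then 1 else 0) ≤ t.ncard := by
  have himage : f '' s ⊆ t := hft.image_subset
  have hxs : x ∉ f '' s := fun ⟨a, ha, hax⟩ => hx a ha hax
  rw [← hf.ncard_image]
  split_ifs with h
  · rw [← ncard_insert_of_notMem hxs (ht.subset himage)]
    exact ncard_le_ncard (insert_subset (hp h) himage) ht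
  · exact ncard_le_ncard himage ht

end Counting

section Naming

variable {Q : Type} {G H : Set (Q × ℕ)} {E : ℕ} {S : Set Q}

theorem finite_setOf_bundle_eq (hG : G.Finite) (hS : S.Nonempty) :
    {D | Bundle G D = S}.Finite := by
  obtain ⟨q, hq⟩ := hS
  refine (hG.image Prod.snd).subset fun D hD => ?_
  exact ⟨(q, D), hD.symm.subset hq, rfl⟩

theorem abstractOf_bundle_pos (hG : G.Finite) (hE : (Bundle G E).Nonempty) :
    0 < AbstractOf G (Bundle G E) :=
  (ncard_pos (finite_setOf_bundle_eq hG hE)).2 ⟨E, rfl⟩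

/-- `f` names each abstract datum `⟨S, i⟩` of the abstraction of `G` by a concrete datum whose
bundle is `S`, distinct abstract data being named differently, and `⟨Q_=, 1⟩` is named `E`, where
`Q_=` is the bundle of `E`. The last condition is also imposed when `Q_=` is empty, in which case
`⟨Q_=, 1⟩` is not an abstract datum. -/
structure IsDatumNaming (G : Set (Q × ℕ)) (E : ℕ) (f : Set Q × ℕ → ℕ) : Prop where
  bundle_apply : ∀ {p : Set Q × ℕ}, AbsDatum (AbstractOf G) p.1 p.2 → Bundle G (f p) = p.1
  injOn : InjOn f {p | AbsDatum (AbstractOf G) p.1 p.2}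
  apply_bundle_one : f (Bundle G E, 1) = E

theorem exists_isDatumNaming (G : Set (Q × ℕ)) (E : ℕ) : ∃ f, IsDatumNaming G E f := by
  have hfiber (S : Set Q) : ∃ g : ℕ → ℕ, MapsTo g (Icc 1 (AbstractOf G S)) {D | Bundle G D = S} ∧
      InjOn g (Icc 1 (AbstractOf G S)) ∧ (Bundle G E = S → g 1 = E) := by
    have hcard : (Icc 1 (AbstractOf G S)).encard ≤ {D | Bundle G D = S}.encard := by
      simpa [AbstractOf, (finite_Icc _ _).encard_eq_coe_toFinset_card] using
        ncard_le_encard {D | Bundle G D = S}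
    by_cases hE : Bundle G E = S
    · obtain ⟨g, hgS, hg, hgE⟩ := exists_injOn_apply_eq_of_encard_le (finite_Icc _ _) hcard 1 hE
      exact ⟨g, hgS, hg, fun _ => hgE⟩
    · obtain ⟨g, hgS, hg⟩ := (finite_Icc _ _).exists_injOn_of_encard_le hcard
      exact ⟨g, hgS, hg, fun h => absurd h hE⟩
  choose g hgS hg hgE using hfiber
  have hbundle {p : Set Q × ℕ} (hp : AbsDatum (AbstractOf G) p.1 p.2) :
      Bundle G (g p.1 p.2) = p.1 := hgS p.1 hp.2
  refine ⟨fun p => g p.1 p.2, hbundle, ?_, hgE _ rfl⟩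
  rintro ⟨S, i⟩ hSi ⟨T, j⟩ hTj (hij : g S i = g T j)
  obtain rfl : S = T := (hbundle hSi).symm.trans ((congrArg (Bundle G) hij).trans (hbundle hTj))
  exact congrArg (Prod.mk S) (hg S hSi.2 hTj.2 hij)

namespace IsDatumNaming

variable {f : Set Q × ℕ → ℕ}

theorem apply_eq_iff (hf : IsDatumNaming G E f) {p : Set Q × ℕ}
    (hp : AbsDatum (AbstractOf G) p.1 p.2) : f p = E ↔ p = (Bundle G E, 1) := by
  refine ⟨fun h => ?_, fun h => h ▸ hf.apply_bundle_one⟩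
  have hbundle : Bundle G E = p.1 := h ▸ hf.bundle_apply hp
  have hone : AbsDatum (AbstractOf G) (Bundle G E) 1 :=
    hbundle ▸ ⟨hp.1, le_rfl, hp.2.1.trans hp.2.2⟩
  exact hf.injOn hp hone (h.trans hf.apply_bundle_one.symm)

theorem ncard_add_ite_le_abstractOf [Decidable (Bundle H E = S)]
    (hf : IsDatumNaming G E f) (hH : H.Finite) (hS : S.Nonempty) :
    {p : Set Q × ℕ | AbsDatum (AbstractOf G) p.1 p.2 ∧ p ≠ (Bundle G E, 1) ∧
      Bundle H (f p) = S}.ncard + (if Bundle H E = S then 1 else 0) ≤ AbstractOf H S :=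
  ncard_add_ite_le_ncard (finite_setOf_bundle_eq hH hS) (fun _ hp => hp.2.2)
    (hf.injOn.mono fun _ hp => hp.1) (fun _ hp => mt (hf.apply_eq_iff hp.1).1 hp.2.1) id

end IsDatumNaming

end Naming

theorem ATRA.Trans.exists_sat_subset_bundle {A : Type} {M : ATRA A} {a : A} {D E : ℕ}
    {G H0 H1 : Set (M.Q × ℕ)} (htr : M.Trans a E G H0 H1) {q : M.Q} (hq : q ∈ Bundle G D) :
    ∃ R : Bool → Bool → Set M.Q, (M.δ q a (decide (D = E))).Sat R ∧
      ∀ d u, R d u ⊆ Bundle (if d then H1 else H0) (if u then E else D) := by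
  obtain ⟨R, hR, hRH⟩ := htr q D hq
  refine ⟨R, hR, fun d u => ?_⟩
  cases u with
  | false => exact (hRH d).2
  | true => exact (hRH d).1

theorem abstraction_sound_general {A : Type} (M : ATRA A) (a : A) (E : ℕ)
    (G H0 H1 : Set (M.Q × ℕ)) (hG : G.Finite) (hH0 : H0.Finite) (hH1 : H1.Finite)
    (htr : M.Trans a E G H0 H1) :
    M.AbsTrans a (Bundle G E) (AbstractOf G) (AbstractOf H0) (AbstractOf H1) := by
  obtain ⟨f, hf⟩ := exists_isDatumNaming G E
  refine ⟨(Bundle G E).eq_empty_or_nonempty.symm.imp_left (abstractOf_bundle_pos hG),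
    fun S i d u => Bundle (if d then H1 else H0) (if u then E else f (S, i)), ?_, fun d => ?_⟩
  · intro S i hSi q hq
    have hqG : q ∈ Bundle G (f (S, i)) := (hf.bundle_apply hSi).symm.subset hq
    obtain ⟨R, hR, hRH⟩ := htr.exists_sat_subset_bundle hqG
    have hread : (S = Bundle G E ∧ i = 1) ↔ f (S, i) = E := by
      rw [hf.apply_eq_iff hSi, Prod.mk.injEq]
    exact ⟨R, by rwa [decide_eq_decide.2 hread], hRH⟩
  · refine ⟨Bundle (if d then H1 else H0) E, ?_, fun _ _ _ => Subset.rfl, fun S' hS' => ?_⟩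
    · exact (congrArg (Bundle (if d then H1 else H0)) hf.apply_bundle_one).subset
    · cases d with
      | false => exact hf.ncard_add_ite_le_abstractOf hH0 hS'
      | true => exact hf.ncard_add_ite_le_abstractOf hH1 hS'

/-- (Soundness of the data abstraction) Every concrete
transition `G →_a^E H₀, H₁` of an ATRA₁ is matched by the abstract transition
`Ḡ →_a^{Q_=} H̄₀, H̄₁`, where `Q_=` is the bundle of `E` in `G`. -/
theorem abstraction_sound {A : Type} [Fintype A] (M : ATRA A) (a : A) (E : ℕ)
    (G H0 H1 : Set (M.Q × ℕ)) (hG : G.Finite) (hH0 : H0.Finite) (hH1 : H1.Finite)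
    (htr : M.Trans a E G H0 H1) :
    M.AbsTrans a (Bundle G E) (AbstractOf G) (AbstractOf H0) (AbstractOf H1) :=
  abstraction_sound_general M a E G H0 H1 hG hH0 hH1 htr
end
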